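/- There exists an absolute constant c > 0 such that for every finite set A ⊆ ℤ_{>0} with |AA| ≤ K|A| (K a positive integer), one has |A+A| ≥ c^{−K}|A|^2. -/

import Mathlib

open scoped Pointwise

/-!
By Freiman's lemma, a set `A` with small product set has valuation vectors spanning an affine space
of dimension at most `2K`, so some `2K` of the valuations already separate the elements of `A`.
By the ultrametric inequality the largest of the valuations of `a`, `b`, `c`, `d` is attained twice
whenever `a + b = c + d`. Splitting the additive quadruples according to which two of the values
agree, Cauchy–Schwarz bounds the square root of the energy of `A` by `6` times the sum of those of
the fibres of one valuation. After `2K` valuations the fibres are points, so the energy of `A` is at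
most `6 ^ (4K) * |A| ^ 2 = 1296 ^ K * |A| ^ 2`, which forces a large sumset.
-/

open Finset Module WithZero
open scoped Combinatorics.Additive

section Coincidences

variable {X Y : Type*} [DecidableEq Y]

/-- The pairs `(x, y) ∈ P × Q` with `φ x = φ y`, as counted by the additive energy when `φ` is
addition. -/
def coincidences (φ : X → Y) (P Q : Finset X) : Finset (X × X) := {z ∈ P ×ˢ Q | φ z.1 = φ z.2}

lemma mem_coincidences {φ : X → Y} {P Q : Finset X} {z : X × X} :
    z ∈ coincidences φ P Q ↔ (z.1 ∈ P ∧ z.2 ∈ Q) ∧ φ z.1 = φ z.2 := by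
  rw [coincidences, mem_filter, mem_product]

lemma card_coincidences_eq_sum (φ : X → Y) (P Q : Finset X) {T : Finset Y}
    (hT : ∀ x ∈ P, φ x ∈ T) :
    #(coincidences φ P Q) = ∑ t ∈ T, #{x ∈ P | φ x = t} * #{x ∈ Q | φ x = t} := by
  rw [card_eq_sum_card_fiberwise (f := fun z ↦ φ z.1) (t := T)
    fun z hz ↦ hT z.1 (mem_coincidences.1 hz).1.1]
  refine sum_congr rfl fun t _ ↦ ?_
  rw [← card_product]
  congr 1
  ext z
  simp only [mem_filter, mem_coincidences, mem_product]
  grind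

lemma card_coincidences_sq_le (φ : X → Y) (P Q : Finset X) :
    #(coincidences φ P Q) ^ 2 ≤ #(coincidences φ P P) * #(coincidences φ Q Q) := by
  classical
  have hP : ∀ x ∈ P, φ x ∈ (P ∪ Q).image φ := fun x hx ↦
    mem_image_of_mem φ (mem_union_left Q hx)
  have hQ : ∀ x ∈ Q, φ x ∈ (P ∪ Q).image φ := fun x hx ↦
    mem_image_of_mem φ (mem_union_right P hx)
  rw [card_coincidences_eq_sum φ P Q hP, card_coincidences_eq_sum φ P P hP,
    card_coincidences_eq_sum φ Q Q hQ]
  simp only [← sq]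
  exact sum_mul_sq_le_sq_mul_sq _ _ _

end Coincidences

section Energy

variable {G κ : Type*} [DecidableEq G] [DecidableEq κ]

theorem card_sq_le_mul_card_add_of_addEnergy_le [Add G] {A : Finset G} {C : ℝ}
    (hA : (E[A] : ℝ) ≤ C * #A ^ 2) : (#A ^ 2 : ℝ) ≤ C * #(A + A) := by
  rcases A.eq_empty_or_nonempty with rfl | hne
  · simp
  have hpos : (0 : ℝ) < #A ^ 2 := pow_pos (mod_cast hne.card_pos) 2
  refine le_of_mul_le_mul_right ?_ hpos
  calc (#A ^ 2 * #A ^ 2 : ℝ) ≤ #(A + A) * E[A] := mod_cast le_card_add_mul_addEnergy A A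
    _ ≤ #(A + A) * (C * #A ^ 2) := by gcongr
    _ = C * #(A + A) * #A ^ 2 := by ring

/-- The coincidences `φ (a, b) = φ (c, d)` in `A` whose first pair is monochromatic for the
colouring `f`; by Cauchy–Schwarz, their number is controlled by the energies of the colour
classes. -/
def monochromaticCoincidences (φ : G × G → G) (f : G → κ) (A : Finset G) :
    Finset ((G × G) × (G × G)) :=
  {z ∈ coincidences φ (A ×ˢ A) (A ×ˢ A) | f z.1.1 = f z.1.2}

lemma mem_monochromaticCoincidences {φ : G × G → G} {f : G → κ} {A : Finset G}
    {z : (G × G) × (G × G)} : z ∈ monochromaticCoincidences φ f A ↔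
      (((z.1.1 ∈ A ∧ z.1.2 ∈ A) ∧ z.2.1 ∈ A ∧ z.2.2 ∈ A) ∧ φ z.1 = φ z.2) ∧ f z.1.1 = f z.1.2 := by
  simp only [monochromaticCoincidences, mem_filter, mem_coincidences, mem_product]

lemma card_monochromaticCoincidences (φ : G × G → G) (f : G → κ) (A : Finset G) :
    #(monochromaticCoincidences φ f A) = ∑ j ∈ A.image f,
      #(coincidences φ ({a ∈ A | f a = j} ×ˢ {a ∈ A | f a = j}) (A ×ˢ A)) := by
  rw [card_eq_sum_card_fiberwise (f := fun z ↦ f z.1.1) (t := A.image f)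
    fun z hz ↦ mem_image_of_mem f (mem_monochromaticCoincidences.1 hz).1.1.1.1]
  refine sum_congr rfl fun j _ ↦ congrArg card ?_
  ext z
  simp only [mem_filter, mem_monochromaticCoincidences, mem_coincidences, mem_product]
  grind

variable [AddCommGroup G]

lemma card_coincidences_add (A : Finset G) :
    #(coincidences (fun x ↦ x.1 + x.2) (A ×ˢ A) (A ×ˢ A)) = E[A] :=
  (addEnergy_eq_card_filter A A).symm

lemma card_coincidences_sub (A : Finset G) :
    #(coincidences (fun x ↦ x.1 - x.2) (A ×ˢ A) (A ×ˢ A)) = E[A] := by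
  refine card_equiv ((Equiv.refl (G × G)).prodCongr (Equiv.prodComm G G)) fun z ↦ ?_
  simp [mem_coincidences, sub_eq_sub_iff_add_eq_add, and_comm, add_comm z.2.1]

lemma card_monochromaticCoincidences_le {φ : G × G → G}
    (hφ : ∀ B : Finset G, #(coincidences φ (B ×ˢ B) (B ×ˢ B)) = E[B]) (f : G → κ)
    (A : Finset G) :
    (#(monochromaticCoincidences φ f A) : ℝ) ≤
      (∑ j ∈ A.image f, √(E[{a ∈ A | f a = j}] : ℝ)) * √(E[A] : ℝ) := by
  rw [card_monochromaticCoincidences, Nat.cast_sum, sum_mul]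
  refine sum_le_sum fun j _ ↦ ?_
  rw [← Real.sqrt_mul (Nat.cast_nonneg _), ← hφ A, ← hφ {a ∈ A | f a = j}]
  exact Real.le_sqrt_of_sq_le (mod_cast card_coincidences_sq_le φ _ _)

/-- `f` takes some value twice on every additive quadruple `a + b = c + d`, as the absolute value
of an ultrametric norm does. -/
def RepeatsOnAddQuadruples {G κ : Type*} [Add G] (f : G → κ) : Prop :=
  ∀ ⦃a b c d : G⦄, a + b = c + d →
    f a = f b ∨ f c = f d ∨ f a = f c ∨ f a = f d ∨ f b = f c ∨ f b = f d

lemma addEnergy_le_card_monochromaticCoincidences {f : G → κ} (hf : RepeatsOnAddQuadruples f)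
    (A : Finset G) :
    E[A] ≤ 2 * #(monochromaticCoincidences (fun x ↦ x.1 + x.2) f A) +
      4 * #(monochromaticCoincidences (fun x ↦ x.1 - x.2) f A) := by
  let M₁ := monochromaticCoincidences (fun x ↦ x.1 + x.2) f A
  let M₂ := monochromaticCoincidences (fun x ↦ x.1 - x.2) f A
  let Q := coincidences (fun x ↦ x.1 + x.2) (A ×ˢ A) (A ×ˢ A)
  have mem_Q {a b c d} (h : ((a, b), (c, d)) ∈ Q) :
      (a ∈ A ∧ b ∈ A ∧ c ∈ A ∧ d ∈ A) ∧ a + b = c + d := by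
    simpa only [Q, mem_coincidences, mem_product, and_assoc] using h
  have mem_M₁ {a b c d} (ha : a ∈ A) (hb : b ∈ A) (hc : c ∈ A) (hd : d ∈ A)
      (h : a + b = c + d) (hab : f a = f b) : ((a, b), (c, d)) ∈ M₁ :=
    mem_monochromaticCoincidences.2 ⟨⟨⟨⟨ha, hb⟩, hc, hd⟩, h⟩, hab⟩
  -- A solution of `a + b = c + d` with `f a = f c` is counted by `a - c = d - b`.
  have mem_M₂ {a b c d} (ha : a ∈ A) (hb : b ∈ A) (hc : c ∈ A) (hd : d ∈ A)
      (h : a + d = c + b) (hab : f a = f b) : ((a, b), (c, d)) ∈ M₂ :=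
    mem_monochromaticCoincidences.2 ⟨⟨⟨⟨ha, hb⟩, hc, hd⟩, sub_eq_sub_iff_add_eq_add.2 h⟩, hab⟩
  have hcover : Q ⊆ M₁ ∪ M₁.image (fun z ↦ (z.2, z.1)) ∪
      (M₂.image (fun z ↦ ((z.1.1, z.2.2), (z.1.2, z.2.1))) ∪
        M₂.image (fun z ↦ ((z.1.1, z.2.2), (z.2.1, z.1.2)))) ∪
      (M₂.image (fun z ↦ ((z.2.2, z.1.1), (z.1.2, z.2.1))) ∪
        M₂.image (fun z ↦ ((z.2.2, z.1.1), (z.2.1, z.1.2)))) := by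
    rintro ⟨⟨a, b⟩, c, d⟩ h
    obtain ⟨⟨ha, hb, hc, hd⟩, h⟩ := mem_Q h
    simp only [mem_union, mem_image]
    rcases hf h with h' | h' | h' | h' | h' | h'
    · exact .inl (.inl (.inl (mem_M₁ ha hb hc hd h h')))
    · exact .inl (.inl (.inr ⟨_, mem_M₁ hc hd ha hb h.symm h', rfl⟩))
    · exact .inl (.inr (.inl ⟨_, mem_M₂ ha hc hd hb (by rw [h, add_comm]) h', rfl⟩))
    · exact .inl (.inr (.inr ⟨_, mem_M₂ ha hd hc hb h h', rfl⟩))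
    · exact .inr (.inl ⟨_, mem_M₂ hb hc hd ha (by rw [add_comm, h, add_comm]) h', rfl⟩)
    · exact .inr (.inr ⟨_, mem_M₂ hb hd hc ha (by rw [add_comm, h]) h', rfl⟩)
  calc E[A] = #Q := (card_coincidences_add A).symm
    _ ≤ #M₁ + #M₁ + (#M₂ + #M₂) + (#M₂ + #M₂) := by
      grw [hcover]
      repeat grw [card_union_le]
      repeat grw [card_image_le]
    _ = 2 * #M₁ + 4 * #M₂ := by ring

theorem sqrt_addEnergy_le_sum_fiber {f : G → κ} (hf : RepeatsOnAddQuadruples f) (A : Finset G) :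
    √(E[A] : ℝ) ≤ 6 * ∑ j ∈ A.image f, √(E[{a ∈ A | f a = j}] : ℝ) := by
  have hadd := card_monochromaticCoincidences_le card_coincidences_add f A
  have hsub := card_monochromaticCoincidences_le card_coincidences_sub f A
  have hE := (Nat.cast_le (α := ℝ)).2 (addEnergy_le_card_monochromaticCoincidences hf A)
  rw [Nat.cast_add, Nat.cast_mul, Nat.cast_mul, Nat.cast_ofNat, Nat.cast_ofNat] at hE
  rcases (Real.sqrt_nonneg (E[A] : ℝ)).eq_or_lt with h0 | hpos
  · rw [← h0]
    exact mul_nonneg (by norm_num) (sum_nonneg fun _ _ ↦ Real.sqrt_nonneg _)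
  · refine le_of_mul_le_mul_right ?_ hpos
    rw [Real.mul_self_sqrt (Nat.cast_nonneg _)]
    linarith

omit [DecidableEq κ] in
theorem sqrt_addEnergy_le_pow_mul_card {ι : Type*} {f : ι → G → κ} (S : Finset ι)
    (hf : ∀ i ∈ S, RepeatsOnAddQuadruples (f i)) {A : Finset G}
    (hA : ∀ a ∈ A, ∀ b ∈ A, (∀ i ∈ S, f i a = f i b) → a = b) :
    √(E[A] : ℝ) ≤ 6 ^ #S * #A := by
  classical
  induction S using Finset.induction_on generalizing A with
  | empty =>
    have hcard : #A ≤ 1 := card_le_one.2 fun a ha b hb ↦ hA a ha b hb (by simp)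
    rcases card_le_one_iff_subset_singleton.1 hcard with ⟨a, ha⟩
    rcases subset_singleton_iff.1 ha with rfl | rfl <;> simp [addEnergy, filter_singleton]
  | insert i S hi ih =>
    have hfiber : ∀ j ∈ A.image (f i), √(E[{a ∈ A | f i a = j}] : ℝ) ≤
        6 ^ #S * #{a ∈ A | f i a = j} := fun j _ ↦
      ih (fun i' hi' ↦ hf i' (mem_insert_of_mem hi')) fun a ha b hb hab ↦ by
        rw [mem_filter] at ha hb
        exact hA a ha.1 b hb.1 (forall_mem_insert .. |>.2 ⟨ha.2.trans hb.2.symm, hab⟩)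
    have hcard : (#A : ℝ) = ∑ j ∈ A.image (f i), (#{a ∈ A | f i a = j} : ℝ) :=
      mod_cast card_eq_sum_card_image (f i) A
    calc √(E[A] : ℝ)
        ≤ 6 * ∑ j ∈ A.image (f i), √(E[{a ∈ A | f i a = j}] : ℝ) :=
          sqrt_addEnergy_le_sum_fiber (hf i (mem_insert_self i S)) A
      _ ≤ 6 * ∑ j ∈ A.image (f i), 6 ^ #S * (#{a ∈ A | f i a = j} : ℝ) := by
          gcongr with j hj
          exact hfiber j hj
      _ = 6 ^ #(insert i S) * #A := by
          rw [← mul_sum, ← hcard, card_insert_of_notMem hi, pow_succ]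
          ring

end Energy

section Freiman

variable {k V H : Type*} [AddCommGroup V] [AddCommGroup H] [LinearOrder H] [IsOrderedAddMonoid H]

lemma mem_affineSpan_of_add_eq_add [Ring k] [Module k V] {s : AffineSubspace k V}
    {a b c d : V} (h : a + b = c + d) (ha : a ∈ s) (hc : c ∈ s) (hd : d ∈ s) : b ∈ s := by
  have hb : (c -ᵥ a) +ᵥ d = b := by
    rw [vsub_eq_sub, vadd_eq_add, sub_add_eq_add_sub, ← h, add_sub_cancel_left]
  exact hb ▸ AffineSubspace.vadd_mem_of_mem_direction (AffineSubspace.vsub_mem_direction hc ha) hd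

lemma finrank_vectorSpan_add_one_le_card [DivisionRing k] [Module k V] {s : Finset V}
    (hs : s.Nonempty) : finrank k (vectorSpan k (s : Set V)) + 1 ≤ #s := by
  have := hs.to_subtype
  have h := finrank_vectorSpan_range_add_one_le k (Subtype.val : s → V)
  rwa [Subtype.range_coe_subtype, Fintype.card_coe] at h

lemma exists_dual_injOn [Field k] [Infinite k] [Module k V] (A : Finset V) :
    ∃ φ : Dual k V, Set.InjOn φ A := by
  classical
  obtain ⟨φ, hφ⟩ := exists_dual_forall_apply_ne_zero (K := k)
    (fun x : A.offDiag ↦ x.1.1 - x.1.2) fun x ↦ sub_ne_zero.2 (mem_offDiag.1 x.2).2.2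
  refine ⟨φ, fun a ha b hb hab ↦ ?_⟩
  by_contra hne
  exact hφ ⟨(a, b), mem_offDiag.2 ⟨ha, hb, hne⟩⟩ (by simp [hab])

variable [DecidableEq V]

/-- The elements `b` of `insert a A` that contribute a sum `a + b` not already in `A + A`; they
measure the growth of the sumset in the induction proving Freiman's lemma. -/
def newSummands (A : Finset V) (a : V) : Finset V := {b ∈ insert a A | a + b ∉ A + A}

lemma card_add_card_newSummands_le (A : Finset V) (a : V) :
    #(A + A) + #(newSummands A a) ≤ #(insert a A + insert a A) := by
  have hdisj : Disjoint (A + A) ((newSummands A a).image (a + ·)) := by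
    simp only [disjoint_right, mem_image]
    rintro _ ⟨b, hb, rfl⟩
    exact (mem_filter.1 hb).2
  rw [← card_image_of_injective (newSummands A a) (add_right_injective a),
    ← card_union_of_disjoint hdisj]
  refine card_le_card (union_subset (add_subset_add (subset_insert a A) (subset_insert a A)) ?_)
  refine image_subset_iff.2 fun b hb ↦ add_mem_add (mem_insert_self a A) (mem_filter.1 hb).1

lemma self_mem_newSummands {A : Finset V} {a : V} (φ : V →+ H) (hlt : ∀ b ∈ A, φ b < φ a) :
    a ∈ newSummands A a := by
  refine mem_filter.2 ⟨mem_insert_self a A, fun h ↦ ?_⟩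
  obtain ⟨c, hc, d, hd, hcd⟩ := mem_add.1 h
  have hlt := add_lt_add (hlt c hc) (hlt d hd)
  rw [← map_add, ← map_add, hcd] at hlt
  exact hlt.false

section Ring

variable [Ring k] [Module k V]

lemma newSummands_eq_insert {A : Finset V} {a : V} (haA : a ∉ affineSpan k (A : Set V))
    (ha : a ∈ newSummands A a) : newSummands A a = insert a A := by
  refine filter_true_of_mem fun b hb hab ↦ ?_
  rcases mem_insert.1 hb with rfl | hbA
  · exact (mem_filter.1 ha).2 hab
  obtain ⟨c, hc, d, hd, hcd⟩ := mem_add.1 hab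
  exact haA (mem_affineSpan_of_add_eq_add ((add_comm b a).trans hcd.symm)
    (mem_affineSpan k hbA) (mem_affineSpan k hc) (mem_affineSpan k hd))

lemma insert_subset_affineSpan_newSummands {A : Finset V} {a : V} (φ : V →+ H)
    (hlt : ∀ b ∈ A, φ b < φ a) :
    (↑(insert a A) : Set V) ⊆ affineSpan k (newSummands A a : Set V) := by
  classical
  by_contra! hnot
  -- For `b` outside the span with `φ b` maximal, `a + b = c + d` with `φ c, φ d > φ b`.
  obtain ⟨b₀, hb₀, hb₀'⟩ := Set.not_subset.1 hnot
  obtain ⟨b, hb, hmax⟩ := ({b ∈ insert a A | b ∉ affineSpan k (newSummands A a : Set V)}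
    ).exists_max_image φ ⟨b₀, mem_filter.2 ⟨hb₀, hb₀'⟩⟩
  obtain ⟨hbA, hb⟩ := mem_filter.1 hb
  have mem_of_lt {c : V} (hc : c ∈ A) (hbc : φ b < φ c) :
      c ∈ affineSpan k (newSummands A a : Set V) := by
    by_contra hc'
    exact hbc.not_ge (hmax c (mem_filter.2 ⟨mem_insert_of_mem hc, hc'⟩))
  have hab : a + b ∈ A + A := by
    by_contra hab
    exact hb (mem_affineSpan k (mem_filter.2 ⟨hbA, hab⟩))
  obtain ⟨c, hc, d, hd, hcd⟩ := mem_add.1 hab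
  have hφ : φ c + φ d = φ a + φ b := by rw [← map_add, ← map_add, hcd]
  have hbc : φ b < φ c := by
    by_contra! h
    exact (add_lt_add_of_le_of_lt h (hlt d hd)).ne (hφ.trans (add_comm _ _))
  have hbd : φ b < φ d := by
    by_contra! h
    exact (add_lt_add_of_lt_of_le (hlt c hc) h).ne hφ
  exact hb (mem_affineSpan_of_add_eq_add hcd.symm
    (mem_affineSpan k (self_mem_newSummands φ hlt)) (mem_of_lt hc hbc) (mem_of_lt hd hbd))

end Ring

section DivisionRing

variable [DivisionRing k] [Module k V]

lemma finrank_vectorSpan_insert_add_one_le_card_newSummands {A : Finset V} {a : V}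
    (φ : V →+ H) (hlt : ∀ b ∈ A, φ b < φ a) :
    finrank k (vectorSpan k (↑(insert a A) : Set V)) + 1 ≤ #(newSummands A a) := by
  have := finiteDimensional_vectorSpan_of_finite k (newSummands A a).finite_toSet
  refine le_trans (Nat.add_le_add_right (Submodule.finrank_mono ?_) 1)
    (finrank_vectorSpan_add_one_le_card ⟨a, self_mem_newSummands φ hlt⟩)
  rw [← direction_affineSpan, ← direction_affineSpan k (newSummands A a : Set V)]
  exact AffineSubspace.direction_le
    (affineSpan_le.2 (insert_subset_affineSpan_newSummands φ hlt))

theorem freiman_mul_card_le_card_add_add_choose_of_injOn (φ : V →+ H) {A : Finset V}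
    (hφ : Set.InjOn φ A) :
    (finrank k (vectorSpan k (A : Set V)) + 1) * #A ≤
      #(A + A) + (finrank k (vectorSpan k (A : Set V)) + 1).choose 2 := by
  induction A using Finset.induction_on_max_value φ with
  | empty => simp
  | insert a A haA hle ih =>
    have hlt : ∀ b ∈ A, φ b < φ a := fun b hb ↦ (hle b hb).lt_of_ne fun h ↦
      haA (hφ (mem_insert_of_mem hb) (mem_insert_self a A) h ▸ hb)
    specialize ih (hφ.mono (coe_subset.2 (subset_insert a A)))
    have hnew := finrank_vectorSpan_insert_add_one_le_card_newSummands (k := k) φ hlt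
    have hcard := card_add_card_newSummands_le A a
    have hmono : finrank k (vectorSpan k (A : Set V)) ≤
        finrank k (vectorSpan k (↑(insert a A) : Set V)) := by
      have := finiteDimensional_vectorSpan_of_finite k (insert a A).finite_toSet
      exact Submodule.finrank_mono (vectorSpan_mono k (coe_subset.2 (subset_insert a A)))
    have hsucc : finrank k (vectorSpan k (↑(insert a A) : Set V)) ≤
        finrank k (vectorSpan k (A : Set V)) + 1 := by
      rw [coe_insert]
      exact finrank_vectorSpan_insert_le_set k (A : Set V) a
    rw [card_insert_of_notMem haA]
    set d := finrank k (vectorSpan k (A : Set V))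
    rcases hmono.eq_or_lt with heq | hgt
    · rw [← heq] at hnew ⊢
      linarith
    · have ha : a ∉ affineSpan k (A : Set V) := fun ha ↦ hgt.ne' <| by
        rw [coe_insert, vectorSpan_insert_eq_vectorSpan ha]
      have hall := newSummands_eq_insert ha (self_mem_newSummands φ hlt)
      rw [hall, card_insert_of_notMem haA] at hcard
      rw [le_antisymm hsucc hgt, Nat.choose_succ_succ' (d + 1) 1, Nat.choose_one_right]
      linarith

end DivisionRing

section Field

variable [Field k] [LinearOrder k] [IsStrictOrderedRing k] [Module k V]

theorem freiman_mul_card_le_card_add_add_choose (A : Finset V) :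
    (finrank k (vectorSpan k (A : Set V)) + 1) * #A ≤
      #(A + A) + (finrank k (vectorSpan k (A : Set V)) + 1).choose 2 := by
  obtain ⟨φ, hφ⟩ := exists_dual_injOn (k := k) A
  exact freiman_mul_card_le_card_add_add_choose_of_injOn φ.toAddMonoidHom hφ

theorem finrank_vectorSpan_le_of_card_add_le {A : Finset V} {K : ℕ} (hA : #(A + A) ≤ K * #A) :
    finrank k (vectorSpan k (A : Set V)) ≤ 2 * K := by
  rcases A.eq_empty_or_nonempty with rfl | hne
  · rw [coe_empty, vectorSpan_empty, finrank_bot]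
    exact Nat.zero_le _
  have hdim := finrank_vectorSpan_add_one_le_card (k := k) hne
  have hfreiman := freiman_mul_card_le_card_add_add_choose (k := k) A
  set d := finrank k (vectorSpan k (A : Set V))
  have hchoose : 2 * (d + 1).choose 2 ≤ d * #A := by
    rw [Nat.choose_two_right, Nat.add_sub_cancel, mul_comm (d + 1)]
    exact (Nat.mul_div_le _ _).trans (by gcongr)
  have : d * #A ≤ 2 * K * #A := by linarith
  exact Nat.le_of_mul_le_mul_right this hne.card_pos

end Field

end Freiman

theorem exists_finset_card_le_finrank_forall_eq_zero {ι k : Type*} [Field k]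
    (W : Submodule k (ι → k)) [FiniteDimensional k W] :
    ∃ S : Finset ι, #S ≤ finrank k W ∧ ∀ x ∈ W, (∀ i ∈ S, x i = 0) → x = 0 := by
  classical
  let coord (i : ι) : Dual k W := LinearMap.proj i ∘ₗ W.subtype
  obtain ⟨g, hg, hspan, -⟩ := Submodule.exists_fun_fin_finrank_span_eq k (Set.range coord)
  choose idx hidx using hg
  refine ⟨univ.image idx, ?_, fun x hx hzero ↦ funext fun i ↦ ?_⟩
  · calc #(univ.image idx) ≤ finrank k (Submodule.span k (Set.range coord)) := by
          simpa using card_image_le (s := univ) (f := idx)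
      _ ≤ finrank k (Dual k W) := Submodule.finrank_le _
      _ = finrank k W := Subspace.dual_finrank_eq
  · have hker : Submodule.span k (Set.range g) ≤ LinearMap.ker (Dual.eval k W ⟨x, hx⟩) := by
      rw [Submodule.span_le]
      rintro _ ⟨n, rfl⟩
      have : coord (idx n) ⟨x, hx⟩ = 0 := hzero (idx n) (mem_image_of_mem idx (mem_univ n))
      rwa [hidx] at this
    have hi : coord i ∈ Submodule.span k (Set.range g) := by
      rw [hspan]
      exact Submodule.subset_span (Set.mem_range_self i)
    exact hker hi

section Valuations

variable {R ι : Type*} [Ring R]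

lemma repeatsOnAddQuadruples_valuation {Γ₀ : Type*} [LinearOrderedCommGroupWithZero Γ₀]
    (v : Valuation R Γ₀) : RepeatsOnAddQuadruples v := by
  intro a b c d h
  have not_dominant {x y z w : R} (hxy : x + y = z + w) :
      ¬(v y < v x ∧ v z < v x ∧ v w < v x) := fun ⟨hy, hz, hw⟩ ↦ by
    have hx := v.map_sub_lt (v.map_add_lt hz hw) hy
    rw [← hxy, add_sub_cancel_right] at hx
    exact hx.false
  have ha := not_dominant h
  have hb := not_dominant ((add_comm b a).trans h)
  have hc := not_dominant h.symm
  have hd := not_dominant ((add_comm d c).trans h.symm)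
  grind

/-- The additively written vector of the valuations of `a`, with coefficients in the ordered field
`ℚ` so that Freiman's lemma applies. A coordinate with `v i a = 0` takes the junk
value `0`. -/
def logVector (v : ι → Valuation R ℤᵐ⁰) (a : R) : ι → ℚ := fun i ↦ ((v i a).log : ℚ)

lemma logVector_mul {v : ι → Valuation R ℤᵐ⁰} {a b : R} (ha : ∀ i, v i a ≠ 0)
    (hb : ∀ i, v i b ≠ 0) : logVector v (a * b) = logVector v a + logVector v b := by
  ext i
  simp [logVector, log_mul (ha i) (hb i)]

lemma logVector_apply_eq {v : ι → Valuation R ℤᵐ⁰} {a b : R} {i : ι} (ha : v i a ≠ 0)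
    (hb : v i b ≠ 0) : logVector v a i = logVector v b i ↔ v i a = v i b := by
  rw [logVector, logVector, Int.cast_inj, ← exp_inj, exp_log ha, exp_log hb]

variable [DecidableEq R]

lemma image_logVector_add_subset [DecidableEq (ι → ℚ)] {v : ι → Valuation R ℤᵐ⁰}
    {A : Finset R} (hA : ∀ a ∈ A, ∀ i, v i a ≠ 0) :
    A.image (logVector v) + A.image (logVector v) ⊆ (A * A).image (logVector v) := by
  simp only [add_subset_iff, forall_mem_image]
  exact fun a ha b hb ↦ logVector_mul (hA a ha) (hA b hb) ▸ mem_image_of_mem _ (mul_mem_mul ha hb)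

theorem exists_separating_valuations {v : ι → Valuation R ℤᵐ⁰} {A : Finset R} {K : ℕ}
    (hA : ∀ a ∈ A, ∀ i, v i a ≠ 0) (hv : Set.InjOn (fun a i ↦ v i a) A)
    (hK : #(A * A) ≤ K * #A) :
    ∃ S : Finset ι, #S ≤ 2 * K ∧ ∀ a ∈ A, ∀ b ∈ A, (∀ i ∈ S, v i a = v i b) → a = b := by
  classical
  have hL : Set.InjOn (logVector v) A := fun a ha b hb h ↦ hv ha hb <| funext fun i ↦
    (logVector_apply_eq (hA a ha i) (hA b hb i)).1 (congrFun h i)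
  let X := A.image (logVector v)
  have hX : #(X + X) ≤ K * #X := by
    calc #(X + X) ≤ #(A * A) :=
          (card_le_card (image_logVector_add_subset hA)).trans card_image_le
      _ ≤ K * #X := by rwa [card_image_of_injOn hL]
  have := finiteDimensional_vectorSpan_of_finite ℚ X.finite_toSet
  obtain ⟨S, hS, hzero⟩ :=
    exists_finset_card_le_finrank_forall_eq_zero (vectorSpan ℚ (X : Set (ι → ℚ)))
  refine ⟨S, hS.trans (finrank_vectorSpan_le_of_card_add_le hX), fun a ha b hb hab ↦ ?_⟩
  refine hL ha hb (sub_eq_zero.1 (hzero _ ?_ fun i hi ↦ ?_))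
  · exact vsub_mem_vectorSpan ℚ (mem_image_of_mem _ ha) (mem_image_of_mem _ hb)
  · exact sub_eq_zero.2 ((logVector_apply_eq (hA a ha i) (hA b hb i)).2 (hab i hi))

theorem chang_energy {v : ι → Valuation R ℤᵐ⁰} {A : Finset R} {K : ℕ}
    (hA : ∀ a ∈ A, ∀ i, v i a ≠ 0) (hv : Set.InjOn (fun a i ↦ v i a) A)
    (hK : #(A * A) ≤ K * #A) : (E[A] : ℝ) ≤ 1296 ^ K * #A ^ 2 := by
  obtain ⟨S, hS, hsep⟩ := exists_separating_valuations hA hv hK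
  have hsqrt : √(E[A] : ℝ) ≤ 6 ^ (2 * K) * #A := by
    grw [sqrt_addEnergy_le_pow_mul_card S (fun i _ ↦ repeatsOnAddQuadruples_valuation (v i)) hsep,
      hS]
    norm_num
  calc (E[A] : ℝ) ≤ (6 ^ (2 * K) * #A) ^ 2 := (Real.sqrt_le_left (by positivity)).1 hsqrt
    _ = 1296 ^ K * #A ^ 2 := by
      rw [mul_pow, ← pow_mul, mul_right_comm, pow_mul]
      norm_num

omit [DecidableEq R] in
theorem chang_sumset_general {M : Type*} [NonAssocSemiring M] [DecidableEq M] {φ : M →+* R}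
    {v : ι → Valuation R ℤᵐ⁰} {A : Finset M} {K : ℕ} (hφ : Function.Injective φ)
    (hA : ∀ a ∈ A, ∀ i, v i (φ a) ≠ 0) (hv : Set.InjOn (fun a i ↦ v i (φ a)) A)
    (hK : #(A * A) ≤ K * #A) : (1296 ^ K : ℝ)⁻¹ * #A ^ 2 ≤ #(A + A) := by
  classical
  have card_image (B : Finset M) : #(B.image φ) = #B := card_image_of_injective B hφ
  have henergy : (E[A.image φ] : ℝ) ≤ 1296 ^ K * #(A.image φ) ^ 2 := by
    refine chang_energy (forall_mem_image.2 hA) ?_ (by rwa [← image_mul, card_image, card_image])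
    rw [coe_image]
    exact hv.image_of_comp
  have hsum := card_sq_le_mul_card_add_of_addEnergy_le henergy
  rw [← image_add, card_image, card_image] at hsum
  exact (inv_mul_le_iff₀ (by positivity)).2 hsum

end Valuations

/-- The `p`-adic valuations of the integers, indexed by the type of primes. -/
def padicValuationFamily (p : Nat.Primes) : Valuation ℤ ℤᵐ⁰ :=
  haveI := Fact.mk p.2
  Int.padicValuation p

lemma padicValuationFamily_natCast_ne_zero {a : ℕ} (ha : a ≠ 0) (p : Nat.Primes) :
    padicValuationFamily p a ≠ 0 := by
  have := Fact.mk p.2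
  exact Int.padicValuation_eq_zero_iff.not.2 (Nat.cast_ne_zero.2 ha)

lemma injOn_padicValuationFamily_natCast :
    Set.InjOn (fun (a : ℕ) p ↦ padicValuationFamily p a) (Set.Ioi 0) := by
  intro a ha b hb h
  have ha : a ≠ 0 := ne_of_gt ha
  have hb : b ≠ 0 := ne_of_gt hb
  refine (Nat.eq_iff_prime_padicValNat_eq a b ha hb).2 fun p hp ↦ ?_
  have := Fact.mk hp
  simpa [padicValuationFamily, ← Rat.padicValuation_cast, Rat.padicValuation, ha, hb]
    using congrFun h ⟨p, hp⟩

/-- Chang's sumset bound: there is an absolute constant `c > 0` such that any finite set of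
positive integers with `|AA| ≤ K|A|` satisfies `|A + A| ≥ c⁻ᴷ |A|²`. -/
theorem chang_sumset : ∃ c : ℝ, 0 < c ∧
    ∀ (K : ℕ), 0 < K → ∀ A : Finset ℕ, (∀ a ∈ A, 0 < a) →
      (A * A).card ≤ K * A.card →
      (c ^ K)⁻¹ * (A.card : ℝ) ^ 2 ≤ ((A + A).card : ℝ) := by
  refine ⟨1296, by norm_num, fun K _ A hA hK ↦ ?_⟩
  exact chang_sumset_general (φ := Nat.castRingHom ℤ) Nat.cast_injective
    (fun a ha ↦ padicValuationFamily_natCast_ne_zero (hA a ha).ne')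
    (injOn_padicValuationFamily_natCast.mono hA) hK
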